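/- arXiv:1204.4503 — 2 statements merged into one kernel-verified Lean document; each statement's English description precedes it below -/
import Mathlib

section
/- Let q ≥ 3 be an integer and fix 0 ≤ β < β_c(q) = (q−1)log(q−1)/(q−2). For σ ∈ Σ_n let S(σ) = (S¹(σ),…,S^q(σ)) with S^k(σ) = n^{−1} #{v ∈ {1,…,n} : σ(v) = k} be the proportions vector. Then the variance of S under the Curie–Weiss Potts measure satisfies Var_{μ_n}(S) = O(n^{−1}): there exists a constant C > 0 such that for all n ≥ 1, E_{μ_n} ‖S − E_{μ_n} S‖₂² ≤ C/n. -/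
open Finset

/-- The (unnormalized) Curie–Weiss Potts weight of a configuration. -/
noncomputable def pottsWeight (q n : ℕ) (β : ℝ) (σ : Fin n → Fin q) : ℝ :=
  Real.exp ((β / (n : ℝ)) * ∑ u : Fin n, ∑ v : Fin n, if σ u = σ v then (1 : ℝ) else 0)

/-- The Curie–Weiss Potts probability measure `μ_n` on configurations. -/
noncomputable def pottsMeasure (q n : ℕ) (β : ℝ) (σ : Fin n → Fin q) : ℝ :=
  pottsWeight q n β σ / ∑ τ : Fin n → Fin q, pottsWeight q n β τ

/-- The proportions vector: `S^k(σ) = n⁻¹ #{v : σ(v) = k}`. -/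
noncomputable def propVec (q n : ℕ) (σ : Fin n → Fin q) (k : Fin q) : ℝ :=
  ((Finset.univ.filter fun v : Fin n => σ v = k).card : ℝ) / n

/-- The static critical inverse temperature `β_c(q) = (q−1)log(q−1)/(q−2)`. -/
noncomputable def betaC (q : ℕ) : ℝ :=
  if q = 2 then 1 else ((q : ℝ) - 1) * Real.log ((q : ℝ) - 1) / ((q : ℝ) - 2)

noncomputable def gKL (p c x : ℝ) : ℝ :=
  Real.log x - Real.log (1 - x) - Real.log p + Real.log (1 - p) - 2 * c * (x - p)

noncomputable def GKL (p c x : ℝ) : ℝ :=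
  x * Real.log x + (1 - x) * Real.log (1 - x) - x * Real.log p - (1 - x) * Real.log (1 - p)
    - c * (x - p) ^ 2

lemma GKL_hasDerivAt (p c x : ℝ) (hx0 : 0 < x) (hx1 : x < 1) :
    HasDerivAt (GKL p c) (gKL p c x) x := by
  have h1 : HasDerivAt (fun x : ℝ => 1 - x) (-1) x := by
    simpa using (hasDerivAt_id x).const_sub 1
  have h0 : HasDerivAt (fun x : ℝ => x) 1 x := hasDerivAt_id x
  have hl : HasDerivAt Real.log x⁻¹ x := Real.hasDerivAt_log hx0.ne'
  have hl1 : HasDerivAt (fun x : ℝ => Real.log (1 - x)) (-1 / (1 - x)) x :=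
    h1.log (by linarith)
  have := ((((h0.mul hl).add (h1.mul hl1)).sub (h0.mul_const (Real.log p))).sub
    (h1.mul_const (Real.log (1 - p)))).sub ((((h0.sub_const p).pow 2)).const_mul c)
  refine this.congr_deriv ?_
  unfold gKL
  have : (1 - x) ≠ 0 := by linarith
  simp
  field_simp
  ring

lemma gKL_hasDerivAt (p c x : ℝ) (hx0 : 0 < x) (hx1 : x < 1) :
    HasDerivAt (gKL p c) (x⁻¹ + (1 - x)⁻¹ - 2 * c) x := by
  have h1 : HasDerivAt (fun x : ℝ => 1 - x) (-1) x := by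
    simpa using (hasDerivAt_id x).const_sub 1
  have h0 : HasDerivAt (fun x : ℝ => x) 1 x := hasDerivAt_id x
  have hl : HasDerivAt Real.log x⁻¹ x := Real.hasDerivAt_log hx0.ne'
  have hl1 : HasDerivAt (fun x : ℝ => Real.log (1 - x)) (-1 / (1 - x)) x :=
    h1.log (by linarith)
  have := ((((hl.sub hl1).sub_const (Real.log p)).add_const (Real.log (1 - p)))).sub
    ((h0.sub_const p).const_mul (2 * c))
  refine this.congr_deriv ?_
  simp
  have : (1 - x) ≠ 0 := by linarith
  field_simp
  ring

lemma gKL_concave (p c : ℝ) : ConcaveOn ℝ (Set.Ioc 0 (1/2)) (gKL p c) := by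
  have hd : ∀ x ∈ Set.Ioc (0:ℝ) (1/2), HasDerivAt (gKL p c) (x⁻¹ + (1 - x)⁻¹ - 2 * c) x :=
    fun x hx => gKL_hasDerivAt p c x hx.1 (by linarith [hx.2])
  apply AntitoneOn.concaveOn_of_deriv (convex_Ioc _ _)
  · exact fun x hx => (hd x hx).continuousAt.continuousWithinAt
  · exact fun x hx => (hd x (interior_subset hx)).differentiableAt.differentiableWithinAt
  · intro x hx y hy hxy
    have hx := interior_subset hx
    have hy := interior_subset hy
    rw [(hd x hx).deriv, (hd y hy).deriv]
    obtain ⟨hx0, hx1⟩ := hx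
    obtain ⟨hy0, hy1⟩ := hy
    have e : ∀ z : ℝ, 0 < z → z ≤ 1/2 → z⁻¹ + (1 - z)⁻¹ = (z * (1 - z))⁻¹ := by
      intro z h0 h1
      have : (1 - z) ≠ 0 := by linarith
      field_simp
      ring
    rw [e x hx0 hx1, e y hy0 hy1]
    have : (y * (1 - y))⁻¹ ≤ (x * (1 - x))⁻¹ := by
      apply inv_anti₀
      · apply mul_pos hx0; linarith
      · nlinarith
    linarith

lemma GKL_nonneg_half (p c : ℝ) (hp0 : 0 < p) (hp1 : p ≤ 1/2)
    (hneg : ∀ x, 0 < x → x ≤ p → gKL p c x ≤ 0)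
    (hpos : ∀ x, p ≤ x → x ≤ 1/2 → 0 ≤ gKL p c x) (x : ℝ) (hx0 : 0 < x) (hx1 : x ≤ 1/2) :
    0 ≤ GKL p c x := by
  have hGp : GKL p c p = 0 := by unfold GKL; ring
  have hd : ∀ x ∈ Set.Ioc (0:ℝ) (1/2), HasDerivAt (GKL p c) (gKL p c x) x :=
    fun x hx => GKL_hasDerivAt p c x hx.1 (by linarith [hx.2])
  rcases le_total x p with h | h
  · have : AntitoneOn (GKL p c) (Set.Icc x p) := by
      apply antitoneOn_of_deriv_nonpos (convex_Icc _ _)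
      · exact fun y hy => (hd y ⟨by linarith [hy.1], by linarith [hy.2]⟩).continuousAt.continuousWithinAt
      · intro y hy
        have hy := interior_subset hy
        exact (hd y ⟨by linarith [hy.1], by linarith [hy.2]⟩).differentiableAt.differentiableWithinAt
      · intro y hy
        have hy := interior_subset hy
        rw [(hd y ⟨by linarith [hy.1], by linarith [hy.2]⟩).deriv]
        exact hneg y (by linarith [hy.1]) hy.2
    rw [← hGp]
    exact this ⟨le_rfl, h⟩ ⟨h, le_rfl⟩ h
  · have : MonotoneOn (GKL p c) (Set.Icc p x) := by
      apply monotoneOn_of_deriv_nonneg (convex_Icc _ _)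
      · exact fun y hy => (hd y ⟨by linarith [hy.1], by linarith [hy.2]⟩).continuousAt.continuousWithinAt
      · intro y hy
        have hy := interior_subset hy
        exact (hd y ⟨by linarith [hy.1], by linarith [hy.2]⟩).differentiableAt.differentiableWithinAt
      · intro y hy
        have hy := interior_subset hy
        rw [(hd y ⟨by linarith [hy.1], by linarith [hy.2]⟩).deriv]
        exact hpos y hy.1 (by linarith [hy.2])
    rw [← hGp]
    exact this ⟨le_rfl, h⟩ ⟨h, le_rfl⟩ h

lemma GKL_symm (p c x : ℝ) (hc : c * (1 - 2 * p) = Real.log (1 - p) - Real.log p) :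
    GKL p c (1 - x) = GKL p c x := by
  unfold GKL
  have : (1 - (1 - x)) = x := by ring
  rw [this]
  linear_combination (2*x-1) * hc

lemma GKL_nonneg (p c : ℝ) (hp0 : 0 < p) (hp1 : p ≤ 1/2)
    (hc : c * (1 - 2 * p) = Real.log (1 - p) - Real.log p) (hc2 : p = 1/2 → c = 2)
    (x : ℝ) (hx0 : 0 < x) (hx1 : x < 1) : 0 ≤ GKL p c x := by
  have hgp : gKL p c p = 0 := by unfold gKL; ring
  have hgh : gKL p c (1/2) = 0 := by
    unfold gKL
    have : (1 - 1/2 : ℝ) = 1/2 := by norm_num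
    rw [this]
    linear_combination -hc
  have key : ∀ y, 0 < y → y ≤ 1/2 → 0 ≤ GKL p c y := by
    apply GKL_nonneg_half p c hp0 hp1
    · intro y hy0 hyp
      rcases hp1.lt_or_eq with h | h
      · rcases hyp.lt_or_eq with h' | h'
        · have := (gKL_concave p c).slope_anti_adjacent (x := y) (y := p) (z := 1/2)
            ⟨hy0, by linarith⟩ ⟨by norm_num, le_rfl⟩ h' h
          rw [hgp, hgh] at this
          simp at this
          by_contra hcon
          push Not at hcon
          have : (-gKL p c y / (p - y)) < 0 := div_neg_of_neg_of_pos (by linarith) (by linarith)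
          linarith
        · rw [h', hgp]
      · have hm : MonotoneOn (gKL p c) (Set.Icc y p) := by
          have hd : ∀ z ∈ Set.Icc y p, HasDerivAt (gKL p c) (z⁻¹ + (1 - z)⁻¹ - 2 * c) z :=
            fun z hz => gKL_hasDerivAt p c z (by linarith [hz.1]) (by linarith [hz.2])
          apply monotoneOn_of_deriv_nonneg (convex_Icc _ _)
          · exact fun z hz => (hd z hz).continuousAt.continuousWithinAt
          · exact fun z hz => (hd z (interior_subset hz)).differentiableAt.differentiableWithinAt
          · intro z hz
            have hz := interior_subset hz
            rw [(hd z hz).deriv, hc2 h]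
            have h0 : 0 < z := by linarith [hz.1]
            have h1 : 0 < 1 - z := by linarith [hz.2]
            have : z⁻¹ + (1 - z)⁻¹ - 2 * 2 = (2 * z - 1) ^ 2 / (z * (1 - z)) := by
              field_simp
              ring
            rw [this]
            positivity
        have := hm ⟨le_rfl, hyp⟩ ⟨hyp, le_rfl⟩ hyp
        rwa [hgp] at this
    · intro y hy0 hy1
      have := (gKL_concave p c).min_le_of_mem_Icc (x := p) (y := 1/2) (z := y)
        ⟨hp0, hp1⟩ ⟨by norm_num, le_rfl⟩ ⟨hy0, hy1⟩
      rw [hgp, hgh] at this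
      simpa using this
  rcases le_total x (1/2) with h | h
  · exact key x hx0 h
  · rw [← GKL_symm p c x hc]
    exact key _ (by linarith) (by linarith)

/-- critical constant with convenient value for small arguments -/
noncomputable def bb (m : ℕ) : ℝ :=
  if m ≤ 2 then 1 else ((m : ℝ) - 1) * Real.log ((m : ℝ) - 1) / ((m : ℝ) - 2)

lemma bb_pos (m : ℕ) : 0 < bb m := by
  unfold bb
  split_ifs with h
  · norm_num
  · have : (3:ℝ) ≤ m := by exact_mod_cast (by omega : 3 ≤ m)
    have : 0 < Real.log ((m:ℝ) - 1) := Real.log_pos (by linarith)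
    apply div_pos (mul_pos (by linarith) this) (by linarith)

lemma bb_step (m : ℕ) (hm : 1 ≤ m) : bb (m + 1) * m ≤ bb m * (m + 1) := by
  rcases (by omega : m = 1 ∨ m = 2 ∨ 3 ≤ m) with rfl | rfl | h
  · norm_num [bb]
  · norm_num [bb]
    have := Real.log_two_lt_d9
    linarith
  · have h1 : ¬ (m + 1 ≤ 2) := by omega
    have h2 : ¬ (m ≤ 2) := by omega
    simp only [bb, h1, h2, if_false]
    obtain ⟨k, rfl⟩ : ∃ k, m = k + 1 := ⟨m - 1, by omega⟩
    have hk : (2:ℝ) ≤ k := by exact_mod_cast (by omega : 2 ≤ k)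
    push_cast
    have e1 : ((k:ℝ) + 1 + 1 - 1) = k + 1 := by ring
    have e2 : ((k:ℝ) + 1 + 1 - 2) = k := by ring
    have e3 : ((k:ℝ) + 1 - 1) = k := by ring
    have e4 : ((k:ℝ) + 1 - 2) = k - 1 := by ring
    rw [e1, e2, e3, e4]
    have hl1 : Real.log (k + 1) ≤ Real.log k + 1 / k := by
      have : Real.log (k+1) - Real.log k ≤ 1 / k := by
        rw [← Real.log_div (by linarith) (by linarith)]
        have := Real.log_le_sub_one_of_pos (x := ((k:ℝ)+1)/k) (by positivity)
        have e : ((k:ℝ)+1)/k - 1 = 1/k := by field_simp; ring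
        linarith
      linarith
    have hl2 : 2 * ((k:ℝ) - 1) / (k + 1) ≤ Real.log k := by
      have := Real.le_log_one_add_of_nonneg (x := (k:ℝ) - 1) (by linarith)
      have e : (k:ℝ) - 1 + 2 = k + 1 := by ring
      have e' : 1 + ((k:ℝ) - 1) = k := by ring
      rwa [e, e'] at this
    have hk1 : 0 < (k:ℝ) - 1 := by linarith
    have hk0 : 0 < (k:ℝ) := by linarith
    rw [div_mul_eq_mul_div, div_mul_eq_mul_div, div_le_div_iff₀ hk0 hk1]
    rw [div_le_iff₀ (by linarith)] at hl2
    have hl3 : k * Real.log (k + 1) ≤ k * Real.log k + 1 := by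
      have := mul_le_mul_of_nonneg_left hl1 hk0.le
      rw [mul_add, mul_one_div_cancel hk0.ne'] at this
      exact this
    set l := Real.log k
    set l' := Real.log ((k:ℝ)+1)
    have s1 : k * ((k + 1) ^ 2 * (k - 1) * l') ≤ (k + 1)^2 * (k - 1) * (k * l + 1) := by
      have := mul_le_mul_of_nonneg_left hl3 (by positivity : 0 ≤ ((k:ℝ) + 1)^2 * (k - 1))
      linarith
    have s2 : ((k:ℝ) + 1)^2 * (k - 1) * (k * l + 1) ≤ k * (k * l * (k+1+1) * k) := by
      have h3 : ((k:ℝ)+1)^2 * (k-1) ≤ k * (l * (k^2 + k + 1)) := by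
        have : 2 * ((k:ℝ)-1) * (k * (k^2+k+1)) ≤ l * (k+1) * (k * (k^2+k+1)) :=
          mul_le_mul_of_nonneg_right hl2 (by positivity)
        have h4 : ((k:ℝ)+1)^3 ≤ 2 * (k * (k^2+k+1)) := by nlinarith
        have h5 : (k - 1) * ((k:ℝ)+1)^3 ≤ (k-1) * (2 * (k * (k^2+k+1))) :=
          mul_le_mul_of_nonneg_left h4 hk1.le
        have h6 : (((k:ℝ)+1)^2 * (k-1)) * (k+1) ≤ (k * (l * (k^2 + k + 1))) * (k+1) := by
          linarith
        exact le_of_mul_le_mul_right h6 (by linarith)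
      linarith
    have := le_of_mul_le_mul_left (s1.trans s2) hk0
    linarith

lemma kl_two (m : ℕ) (hm : 1 ≤ m) (x : ℝ) (hx0 : 0 < x) (hx1 : x < 1) :
    bb (m+1) * ((m + 1) / m) * (x - 1/(m+1))^2 ≤
      x * Real.log ((m+1) * x) + (1 - x) * Real.log ((m+1) * (1 - x) / m) := by
  have hm1 : (1:ℝ) ≤ m := by exact_mod_cast hm
  have hm0 : (m:ℝ) ≠ 0 := by linarith
  have hm0' : (m:ℝ) + 1 ≠ 0 := by linarith
  have e1 : 1 - 1 / ((m:ℝ)+1) = m / (m+1) := by field_simp; ring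
  have := GKL_nonneg (1/(m+1)) (bb (m+1) * ((m + 1) / m)) (by positivity)
    (by rw [div_le_div_iff₀ (by linarith) (by norm_num)]; linarith) ?_ ?_ x hx0 hx1
  · unfold GKL at this
    rw [e1, Real.log_div hm0 hm0', Real.log_div one_ne_zero hm0', Real.log_one] at this
    rw [Real.log_mul hm0' hx0.ne', Real.log_div (mul_ne_zero hm0' (by linarith)) hm0,
      Real.log_mul hm0' (by linarith)]
    linarith
  · rw [e1, Real.log_div hm0 hm0', Real.log_div one_ne_zero hm0', Real.log_one]
    rcases hm.eq_or_lt with rfl | h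
    · norm_num
    · have h1 : ¬ (m + 1 ≤ 2) := by omega
      have : (m:ℝ) - 1 ≠ 0 := by
        have : (2:ℝ) ≤ m := by exact_mod_cast h
        linarith
      simp only [bb, h1, if_false]
      push_cast
      have e2 : ((m:ℝ) + 1 - 1) = m := by ring
      have e3 : ((m:ℝ) + 1 - 2) = m - 1 := by ring
      rw [e2, e3]
      field_simp
      ring
  · intro h
    have : (m:ℝ) = 1 := by field_simp at h; linarith
    have : m = 1 := by exact_mod_cast this
    subst this
    norm_num [bb]

lemma kl_finset {ι : Type*} [DecidableEq ι] (m : ℕ) (hm : 1 ≤ m) : ∀ (T : Finset ι) (s : ι → ℝ),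
    T.card = m → (∀ i ∈ T, 0 < s i) → ∑ i ∈ T, s i = 1 →
    bb m * (∑ i ∈ T, s i ^ 2 - 1 / m) ≤ ∑ i ∈ T, s i * Real.log (m * s i) := by
  induction m, hm using Nat.le_induction with
  | base =>
    intro T s hT hs h1
    obtain ⟨a, rfl⟩ := Finset.card_eq_one.mp hT
    simp at h1 ⊢
    simp [h1]
  | succ m hm ih =>
    intro T s hT hs h1
    have hm1 : (1:ℝ) ≤ m := by exact_mod_cast hm
    have hne : T.Nonempty := Finset.card_pos.mp (by omega)
    obtain ⟨a, haT, hmax⟩ := T.exists_max_image s hne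
    set x := s a with hx
    have hcard : (T.erase a).card = m := by rw [Finset.card_erase_of_mem haT]; omega
    have hsum : ∑ i ∈ T.erase a, s i = 1 - x := by
      have := Finset.add_sum_erase T s haT
      linarith
    have hx0 : 0 < x := hs a haT
    have hne' : (T.erase a).Nonempty := Finset.card_pos.mp (by omega)
    have hpos' : ∀ i ∈ T.erase a, 0 < s i := fun i hi => hs i (Finset.mem_of_mem_erase hi)
    have hx1 : x < 1 := by
      have := Finset.sum_pos hpos' hne'
      linarith
    have hB : 0 < 1 - x := by linarith
    have hxm : 1 ≤ (m + 1) * x := by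
      have := Finset.sum_le_card_nsmul T s x hmax
      rw [h1, hT] at this
      simpa using this
    have IH := ih (T.erase a) (fun i => s i / (1 - x)) hcard
      (fun i hi => div_pos (hpos' i hi) hB) (by rw [← Finset.sum_div, hsum, div_self hB.ne'])
    have K := kl_two m hm x hx0 hx1
    have hst := bb_step m hm
    rw [← Finset.add_sum_erase T _ haT, ← Finset.add_sum_erase T _ haT, ← hx]
    have eV : ∑ i ∈ T.erase a, (s i / (1-x))^2 = (∑ i ∈ T.erase a, s i ^2) / (1-x)^2 := by
      rw [Finset.sum_div]
      exact Finset.sum_congr rfl fun i _ => by rw [div_pow]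
    have eL : ∑ i ∈ T.erase a, s i * Real.log (((m + 1 : ℕ):ℝ) * s i) =
        (1 - x) * ∑ i ∈ T.erase a, s i / (1-x) * Real.log (m * (s i / (1-x)))
         + (1 - x) * Real.log ((m+1) * (1 - x) / m) := by
      have e0 : (1 - x) * Real.log ((m+1) * (1 - x) / m) =
          ∑ i ∈ T.erase a, s i * Real.log ((m+1) * (1 - x) / m) := by
        rw [← Finset.sum_mul, hsum]
      rw [e0, Finset.mul_sum, ← Finset.sum_add_distrib]
      refine Finset.sum_congr rfl fun i hi => ?_
      have := hpos' i hi
      have e : ((m + 1 : ℕ):ℝ) * s i = (m * (s i / (1-x))) * ((m+1) * (1 - x) / m) := by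
        push_cast
        field_simp
      rw [e, Real.log_mul (by positivity) (by positivity)]
      field_simp
    rw [eL]
    rw [eV] at IH
    set Q := ∑ i ∈ T.erase a, s i ^2 with hQ
    set E := ∑ i ∈ T.erase a, s i / (1-x) * Real.log (m * (s i / (1-x)))
    have hV : 0 ≤ Q / (1-x)^2 - 1/m := by
      have := sq_sum_le_card_mul_sum_sq (s := T.erase a) (f := s)
      rw [hsum, hcard, ← hQ] at this
      rw [sub_nonneg, div_le_div_iff₀ (by linarith) (by positivity)]
      linarith
    set V := Q / (1-x)^2 - 1/m with hVdef
    have hQV : Q = (1-x)^2 * (V + 1/m) := by rw [hVdef]; field_simp; ring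
    have hbB : bb (m+1) * (1-x) ≤ bb m := by
      have hb := bb_pos (m+1)
      have : (1 - x) * (m+1) ≤ m := by linarith
      have : bb (m+1) * ((1 - x) * (m+1)) ≤ bb (m+1) * m := mul_le_mul_of_nonneg_left this hb.le
      have : (bb (m+1) * (1-x)) * (m+1) ≤ bb m * (m+1) := by linarith
      exact le_of_mul_le_mul_right this (by linarith)
    have h3 : (1-x) * (bb (m+1) * (1-x) * V) ≤ (1-x) * E := by
      refine mul_le_mul_of_nonneg_left (le_trans ?_ IH) hB.le
      exact mul_le_mul_of_nonneg_right hbB hV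
    have e5 : bb (m+1) * (x^2 + Q - 1 / ((m+1:ℕ):ℝ)) =
        bb (m+1) * ((m + 1) / m) * (x - 1/(m+1))^2 + (1-x) * (bb (m+1) * (1-x) * V) := by
      rw [hQV]
      push_cast
      field_simp
      ring
    rw [e5]
    push_cast
    linarith

/-- Sharp sub-Gaussian bound for the uniform measure on the vertices of the simplex. -/
lemma lse_bound (q : ℕ) (hq : 1 ≤ q) (t : Fin q → ℝ) :
    Real.log ((∑ k, Real.exp (t k)) / q) ≤ (∑ k, t k) / q + (∑ k, t k ^ 2) / (4 * bb q) := by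
  have hq0 : (0:ℝ) < q := by exact_mod_cast hq
  have : Nonempty (Fin q) := ⟨⟨0, hq⟩⟩
  set Z := ∑ k, Real.exp (t k) with hZ
  have hZ0 : 0 < Z := Finset.sum_pos (fun i _ => Real.exp_pos _) Finset.univ_nonempty
  have hs1 : ∑ k, Real.exp (t k) / Z = 1 := by rw [← Finset.sum_div, div_self hZ0.ne']
  have K := kl_finset q hq (Finset.univ : Finset (Fin q)) (fun k => Real.exp (t k) / Z)
    (by simp) (fun i _ => by positivity) hs1
  have hb := bb_pos q
  set s : Fin q → ℝ := fun k => Real.exp (t k) / Z with hs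
  have e : ∀ k, Real.log (q * s k) = t k - Real.log (Z / q) := by
    intro k
    rw [hs, Real.log_div hZ0.ne' hq0.ne', Real.log_mul hq0.ne' (by positivity),
      Real.log_div (Real.exp_pos _).ne' hZ0.ne', Real.log_exp]
    ring
  have e1 : ∑ k, s k * Real.log (q * s k) = ∑ k, s k * t k - Real.log (Z / q) := by
    simp only [e, mul_sub, Finset.sum_sub_distrib, ← Finset.sum_mul]
    rw [hs1, one_mul]
  have K : bb q * (∑ k, s k ^ 2 - 1 / q) ≤ ∑ k, s k * Real.log (q * s k) := K
  rw [e1] at K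
  have e2 : ∑ k, s k * t k = ∑ k, (s k - 1/q) * t k + (∑ k, t k) / q := by
    rw [Finset.sum_div, ← Finset.sum_add_distrib]
    exact Finset.sum_congr rfl fun k _ => by ring
  have e3 : ∑ k, (s k - 1/q)^2 = ∑ k, s k ^2 - 1/q := by
    have : ∀ k, (s k - 1/q)^2 = s k ^2 - 2/q * s k + 1/q^2 := fun k => by ring
    simp only [this, Finset.sum_add_distrib, Finset.sum_sub_distrib, ← Finset.mul_sum]
    rw [hs1]
    simp
    field_simp
    ring
  have e4 : ∑ k, (s k - 1/q) * t k ≤ bb q * ∑ k, (s k - 1/q)^2 + (∑ k, t k ^ 2) / (4 * bb q) := by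
    rw [Finset.mul_sum, Finset.sum_div, ← Finset.sum_add_distrib]
    refine Finset.sum_le_sum fun k _ => ?_
    have : bb q * (s k - 1/q)^2 + t k ^2 / (4 * bb q) - (s k - 1/q) * t k
      = (2 * bb q * (s k - 1/q) - t k)^2 / (4 * bb q) := by
      generalize s k - 1/q = y
      field_simp
      ring
    have : 0 ≤ (2 * bb q * (s k - 1/q) - t k)^2 / (4 * bb q) := by positivity
    linarith
  rw [e3] at e4
  linarith

lemma sum_exp_bound (q n : ℕ) (hq : 1 ≤ q) (t : Fin q → ℝ) :
    (∑ k, Real.exp (t k)) ^ n * Real.exp (-(n * ((∑ k, t k) / q))) ≤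
      (q:ℝ)^n * Real.exp (n * ((∑ k, t k ^ 2) / (4 * bb q))) := by
  have hq0 : (0:ℝ) < q := by exact_mod_cast hq
  have : Nonempty (Fin q) := ⟨⟨0, hq⟩⟩
  have hZ0 : 0 < ∑ k, Real.exp (t k) :=
    Finset.sum_pos (fun i _ => Real.exp_pos _) Finset.univ_nonempty
  have h := lse_bound q hq t
  rw [Real.log_le_iff_le_exp (by positivity), div_le_iff₀ hq0] at h
  have h2 : (∑ k, Real.exp (t k)) * Real.exp (-((∑ k, t k) / q)) ≤
      q * Real.exp ((∑ k, t k ^ 2) / (4 * bb q)) := by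
    rw [Real.exp_neg, ← div_eq_mul_inv, div_le_iff₀ (Real.exp_pos _)]
    rw [Real.exp_add] at h
    linarith
  have h3 := pow_le_pow_left₀ (by positivity) h2 n
  rw [mul_pow, mul_pow, ← Real.exp_nat_mul, ← Real.exp_nat_mul] at h3
  rwa [mul_neg] at h3

lemma gauss_lin (b c : ℝ) (hb : 0 < b) :
    MeasureTheory.Integrable (fun y : ℝ => Real.exp (-b * y^2 + c * y)) ∧
    ∫ y : ℝ, Real.exp (-b * y^2 + c * y) = Real.sqrt (Real.pi / b) * Real.exp (c^2/(4*b)) := by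
  have e : (fun y : ℝ => Real.exp (-b * y^2 + c * y)) =
      fun y => Real.exp (-b * (y - c/(2*b))^2) * Real.exp (c^2/(4*b)) := by
    funext y
    rw [← Real.exp_add]
    congr 1
    field_simp
    ring
  rw [e]
  constructor
  · exact ((integrable_exp_neg_mul_sq hb).comp_sub_right (c/(2*b))).mul_const _
  · rw [MeasureTheory.integral_mul_const,
      MeasureTheory.integral_sub_right_eq_self (fun y : ℝ => Real.exp (-b * y^2)),
      integral_gaussian]

lemma gauss_multi (q : ℕ) (b : ℝ) (hb : 0 < b) (c : Fin q → ℝ) :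
    MeasureTheory.Integrable (fun y : Fin q → ℝ => Real.exp (∑ k, (-b * y k^2 + c k * y k))) ∧
    ∫ y : Fin q → ℝ, Real.exp (∑ k, (-b * y k^2 + c k * y k)) =
      Real.sqrt (Real.pi / b) ^ q * Real.exp (∑ k, c k^2/(4*b)) := by
  simp only [Real.exp_sum]
  constructor
  · exact MeasureTheory.Integrable.fintype_prod (f := fun k y => Real.exp (-b * y^2 + c k * y))
      (fun k => (gauss_lin b (c k) hb).1)
  · have := MeasureTheory.integral_fintype_prod_volume_eq_prod (E := fun _ : Fin q => ℝ) (fun k y => Real.exp (-b * y^2 + c k * y))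
    rw [this]
    simp only [(gauss_lin b _ hb).2, Finset.prod_mul_distrib]
    simp

lemma sum_configs (q n : ℕ) (hn : 1 ≤ n) (y : Fin q → ℝ) :
    ∑ σ : Fin n → Fin q, Real.exp (∑ k, n * (propVec q n σ k - 1/q) * y k) =
      (∑ k, Real.exp (y k)) ^ n * Real.exp (-(n * ((∑ k, y k) / q))) := by
  have hn0 : (n:ℝ) ≠ 0 := by have : (1:ℝ) ≤ n := by exact_mod_cast hn
                             linarith
  have h : ∀ σ : Fin n → Fin q, ∑ k, n * (propVec q n σ k - 1/q) * y k =
      ∑ v, y (σ v) + (-(n * ((∑ k, y k) / q))) := by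
    intro σ
    have h1 : ∑ v, y (σ v) = ∑ k, (n * propVec q n σ k) * y k := by
      rw [← Finset.sum_fiberwise' (Finset.univ : Finset (Fin n)) σ y]
      refine Finset.sum_congr rfl fun k _ => ?_
      unfold propVec
      rw [Finset.sum_const, nsmul_eq_mul]
      field_simp
    rw [h1, Finset.sum_div, Finset.mul_sum, ← Finset.sum_neg_distrib, ← Finset.sum_add_distrib]
    exact Finset.sum_congr rfl fun k _ => by ring
  simp only [h, Real.exp_add, ← Finset.sum_mul]
  congr 1
  simp only [Real.exp_sum]
  have := Finset.prod_univ_sum (fun _ : Fin n => (Finset.univ : Finset (Fin q)))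
    (fun _ k => Real.exp (y k))
  simpa using this.symm

lemma partition_bound (q n : ℕ) (hq : 1 ≤ q) (hn : 1 ≤ n) (γ : ℝ) (hγ : 0 < γ) (hγb : γ < bb q) :
    ∑ σ : Fin n → Fin q, Real.exp (n * γ * ∑ k, (propVec q n σ k - 1/q)^2) ≤
      (q:ℝ)^n * Real.sqrt (bb q / (bb q - γ)) ^ q := by
  have hn0 : (0:ℝ) < n := by exact_mod_cast hn
  have hbb := bb_pos q
  set b : ℝ := n / (4 * γ) with hb
  have hb0 : 0 < b := by positivity
  set b2 : ℝ := n / (4 * γ) - n / (4 * bb q) with hb2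
  have hb20 : 0 < b2 := by
    rw [hb2, sub_pos]
    apply div_lt_div_of_pos_left hn0 (by positivity) (by linarith)
  have hP : 0 < Real.sqrt (Real.pi / b) ^ q := by
    have := Real.pi_pos
    positivity
  have h1 : ∀ σ : Fin n → Fin q,
      Real.sqrt (Real.pi / b) ^ q * Real.exp (n * γ * ∑ k, (propVec q n σ k - 1/q)^2) =
      ∫ y : Fin q → ℝ, Real.exp (∑ k, (-b * y k^2 + n * (propVec q n σ k - 1/q) * y k)) := by
    intro σ
    rw [(gauss_multi q b hb0 _).2, Finset.mul_sum]
    congr 2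
    refine Finset.sum_congr rfl fun k _ => ?_
    rw [hb]
    field_simp
  have h2 : ∑ σ : Fin n → Fin q,
      Real.sqrt (Real.pi / b) ^ q * Real.exp (n * γ * ∑ k, (propVec q n σ k - 1/q)^2) ≤
      (q:ℝ)^n * Real.sqrt (Real.pi / b2) ^ q := by
    simp only [h1]
    rw [← MeasureTheory.integral_finsetSum _ (fun σ _ => (gauss_multi q b hb0 _).1)]
    have g2 := gauss_multi q b2 hb20 (fun _ => 0)
    have : (q:ℝ)^n * Real.sqrt (Real.pi / b2) ^ q =
      ∫ y : Fin q → ℝ, (q:ℝ)^n * Real.exp (∑ k, (-b2 * y k^2 + 0 * y k)) := by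
      rw [MeasureTheory.integral_const_mul, g2.2]
      simp
    rw [this]
    apply MeasureTheory.integral_mono
    · exact MeasureTheory.integrable_finsetSum _ (fun σ _ => (gauss_multi q b hb0 _).1)
    · exact g2.1.const_mul _
    · intro y
      simp only [Finset.sum_add_distrib, Real.exp_add, ← Finset.mul_sum]
      rw [sum_configs q n hn y]
      have := mul_le_mul_of_nonneg_left (sum_exp_bound q n hq y)
        (Real.exp_pos (-b * ∑ k, y k^2)).le
      refine this.trans (le_of_eq ?_)
      rw [mul_left_comm, ← Real.exp_add]
      simp
      left
      rw [hb2, hb]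
      ring
  rw [← Finset.mul_sum] at h2
  have h3 : Real.sqrt (Real.pi / b2) = Real.sqrt (Real.pi / b) * Real.sqrt (bb q / (bb q - γ)) := by
    rw [← Real.sqrt_mul (by have := Real.pi_pos; positivity)]
    congr 1
    have : bb q - γ ≠ 0 := by linarith
    have : b2 = b * ((bb q - γ) / bb q) := by
      rw [hb2, hb]
      field_simp
    rw [this]
    field_simp
  rw [h3, mul_pow, mul_left_comm] at h2
  exact le_of_mul_le_mul_left h2 hP

lemma weight_eq (q n : ℕ) (hq : 1 ≤ q) (hn : 1 ≤ n) (β : ℝ) (σ : Fin n → Fin q) :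
    pottsWeight q n β σ =
      Real.exp (n * β / q) * Real.exp (n * β * ∑ k, (propVec q n σ k - 1/q)^2) := by
  have hn0 : (0:ℝ) < n := by exact_mod_cast hn
  have hq0 : (0:ℝ) < q := by exact_mod_cast hq
  unfold pottsWeight
  rw [← Real.exp_add]
  congr 1
  have hS : ∑ k, propVec q n σ k = 1 := by
    unfold propVec
    rw [← Finset.sum_div, ← Nat.cast_sum, ← Finset.card_eq_sum_card_fiberwise (fun _ _ => Finset.mem_coe.mpr (Finset.mem_univ _))]
    simp
    omega
  have h1 : ∑ u : Fin n, ∑ v : Fin n, (if σ u = σ v then (1 : ℝ) else 0) =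
      n^2 * ∑ k, propVec q n σ k ^2 := by
    have : ∀ u, ∑ v : Fin n, (if σ u = σ v then (1 : ℝ) else 0) = n * propVec q n σ (σ u) := by
      intro u
      unfold propVec
      rw [mul_div_cancel₀ _ hn0.ne']
      simp [eq_comm]
    simp only [this]
    rw [← Finset.sum_fiberwise' (Finset.univ : Finset (Fin n)) σ (fun k => n * propVec q n σ k),
      Finset.mul_sum]
    refine Finset.sum_congr rfl fun k _ => ?_
    rw [Finset.sum_const, nsmul_eq_mul]
    unfold propVec
    field_simp
  have h2 : ∑ k, (propVec q n σ k - 1/q)^2 = ∑ k, propVec q n σ k ^2 - 1/q := by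
    have : ∀ k, (propVec q n σ k - 1/q)^2 =
      propVec q n σ k ^2 - 2/q * propVec q n σ k + 1/q^2 := fun k => by ring
    simp only [this, Finset.sum_add_distrib, Finset.sum_sub_distrib, ← Finset.mul_sum]
    rw [hS]
    simp
    field_simp
    ring
  rw [h1, h2]
  field_simp
  ring

lemma var_le {Ω : Type*} [Fintype Ω] (μ X : Ω → ℝ) (h1 : ∑ ω, μ ω = 1) (a : ℝ) :
    ∑ ω, μ ω * (X ω - ∑ τ, μ τ * X τ)^2 ≤ ∑ ω, μ ω * (X ω - a)^2 := by
  set M := ∑ τ, μ τ * X τ with hM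
  have : ∑ ω, μ ω * (X ω - a)^2 = ∑ ω, μ ω * (X ω - M)^2 + (M - a)^2 := by
    have e : ∀ ω, μ ω * (X ω - a)^2 = μ ω * (X ω - M)^2 + 2*(M-a)*(μ ω * X ω)
      + μ ω * (a^2 - M^2) := fun ω => by ring
    simp only [e, Finset.sum_add_distrib, ← Finset.mul_sum, ← Finset.sum_mul]
    rw [← hM, h1]
    ring
  nlinarith [sq_nonneg (M - a)]

/-- **Variance of the proportions vector** (Corollary 3.5). For `q ≥ 3` and
`0 ≤ β < β_c(q)`, the variance `E_{μ_n} ‖S − E_{μ_n} S‖₂²` of the proportions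
vector under the Curie–Weiss Potts measure is `O(n⁻¹)`. -/
theorem potts_proportions_variance (q : ℕ) (hq : 3 ≤ q) (β : ℝ)
    (hβ0 : 0 ≤ β) (hβ : β < betaC q) :
    ∃ C : ℝ, 0 < C ∧ ∀ n : ℕ, 1 ≤ n →
      ∑ σ : Fin n → Fin q, pottsMeasure q n β σ *
          ∑ k : Fin q,
            (propVec q n σ k - ∑ τ : Fin n → Fin q, pottsMeasure q n β τ * propVec q n τ k) ^ 2
        ≤ C / n := by
  have hbc : betaC q = bb q := by
    unfold betaC bb
    rw [if_neg (by omega), if_neg (by omega)]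
  rw [hbc] at hβ
  have hq1 : 1 ≤ q := by omega
  have hbb := bb_pos q
  obtain ⟨γ, hγ1, hγ2⟩ := exists_between hβ
  have hγ0 : 0 < γ := by linarith
  have hd : 0 < γ - β := by linarith
  have hd2 : 0 < bb q - γ := by linarith
  set K := Real.sqrt (bb q / (bb q - γ)) ^ q with hK
  have hK0 : 0 < K := by positivity
  refine ⟨K / (γ - β), by positivity, fun n hn => ?_⟩
  have hn0 : (0:ℝ) < n := by exact_mod_cast hn
  have hq0 : (0:ℝ) < q := by exact_mod_cast hq1
  set W := ∑ τ : Fin n → Fin q, pottsWeight q n β τ with hW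
  set V : (Fin n → Fin q) → ℝ := fun σ => ∑ k, (propVec q n σ k - 1/q)^2 with hV
  have hV0 : ∀ σ, 0 ≤ V σ := fun σ => Finset.sum_nonneg fun k _ => sq_nonneg _
  have hw : ∀ σ, pottsWeight q n β σ = Real.exp (n * β / q) * Real.exp (n * β * V σ) :=
    fun σ => weight_eq q n hq1 hn β σ
  have hWl : Real.exp (n * β / q) * (q:ℝ)^n ≤ W := by
    have : ∑ τ : Fin n → Fin q, Real.exp (n * β / q) ≤ W := by
      rw [hW]
      refine Finset.sum_le_sum fun σ _ => ?_
      rw [hw]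
      have : 1 ≤ Real.exp (n * β * V σ) := Real.one_le_exp (by have := hV0 σ; positivity)
      exact le_mul_of_one_le_right (Real.exp_pos _).le this
    simpa [mul_comm] using this
  have hW0 : 0 < W := lt_of_lt_of_le (by positivity) hWl
  have hμ1 : ∑ σ, pottsMeasure q n β σ = 1 := by
    unfold pottsMeasure
    rw [← Finset.sum_div, ← hW, div_self hW0.ne']
  have step1 : ∑ σ : Fin n → Fin q, pottsMeasure q n β σ *
          ∑ k : Fin q,
            (propVec q n σ k - ∑ τ : Fin n → Fin q, pottsMeasure q n β τ * propVec q n τ k) ^ 2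
        ≤ ∑ σ : Fin n → Fin q, pottsMeasure q n β σ * V σ := by
    simp only [hV, Finset.mul_sum]
    rw [Finset.sum_comm, Finset.sum_comm (γ := Fin n → Fin q)]
    exact Finset.sum_le_sum fun k _ => var_le _ (fun σ => propVec q n σ k) hμ1 (1/q)
  refine step1.trans ?_
  have step2 : ∀ σ, n * (γ - β) * (pottsWeight q n β σ * V σ) ≤
      Real.exp (n * β / q) * Real.exp (n * γ * V σ) := by
    intro σ
    rw [hw]
    have h1 : n * (γ - β) * V σ ≤ Real.exp (n * (γ - β) * V σ) := by
      linarith [Real.add_one_le_exp (n * (γ - β) * V σ)]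
    have h2 : Real.exp (n * γ * V σ) = Real.exp (n * β * V σ) * Real.exp (n * (γ - β) * V σ) := by
      rw [← Real.exp_add]
      congr 1
      ring
    rw [h2]
    have := mul_le_mul_of_nonneg_left h1
      (by positivity : 0 ≤ Real.exp (n * β / q) * Real.exp (n * β * V σ))
    linarith
  have step3 : n * (γ - β) * ∑ σ, pottsWeight q n β σ * V σ ≤ K * W := by
    rw [Finset.mul_sum]
    refine (Finset.sum_le_sum fun σ _ => step2 σ).trans ?_
    rw [← Finset.mul_sum]
    have h1 := mul_le_mul_of_nonneg_left (partition_bound q n hq1 hn γ hγ0 hγ2)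
      (Real.exp_pos (n * β / q)).le
    refine h1.trans ?_
    have := mul_le_mul_of_nonneg_left hWl hK0.le
    linarith
  have e : ∑ σ, pottsMeasure q n β σ * V σ = (∑ σ, pottsWeight q n β σ * V σ) / W := by
    rw [Finset.sum_div]
    exact Finset.sum_congr rfl fun σ _ => by unfold pottsMeasure; rw [← hW]; ring
  rw [e, div_div, div_le_div_iff₀ hW0 (by positivity)]
  linarith
end

section
/- For every integer q ≥ 3, β_c(q)·(1 − 1/q) < β_c(q−1), where β_c(2) = 1 and β_c(q) = (q−1)log(q−1)/(q−2) for q ≥ 3. Equivalently, this follows for q ≥ 4 from the fact that the function f(x) = ((x−1)/(x(x−2))) log(x−1) is strictly decreasing on [3, ∞). -/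
theorem aux_f_anti :
    StrictAntiOn (fun x : ℝ => (x - 1) / (x * (x - 2)) * Real.log (x - 1))
      (Set.Ici (3 : ℝ)) := by
  have hder : ∀ x : ℝ, 3 ≤ x → HasDerivAt
      (fun x : ℝ => (x - 1) / (x * (x - 2)) * Real.log (x - 1))
      (((1 * (x * (x - 2)) - (x - 1) * (1 * (x - 2) + x * 1)) / (x * (x - 2)) ^ 2)
        * Real.log (x - 1) + (x - 1) / (x * (x - 2)) * (1 / (x - 1))) x := by
    intro x hx
    have h1 : HasDerivAt (fun x : ℝ => x - 1) 1 x := (hasDerivAt_id x).sub_const 1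
    have h2 : HasDerivAt (fun x : ℝ => x - 2) 1 x := (hasDerivAt_id x).sub_const 2
    have h3 : HasDerivAt (fun x : ℝ => x * (x - 2)) (1 * (x - 2) + x * 1) x :=
      (hasDerivAt_id x).mul h2
    have hne : x * (x - 2) ≠ 0 := by
      have : 0 < x * (x - 2) := mul_pos (by linarith) (by linarith)
      exact this.ne'
    exact (h1.div h3 hne).mul (h1.log (by linarith))
  apply strictAntiOn_of_deriv_neg (convex_Ici 3)
  · intro x hx
    exact (hder x hx).continuousAt.continuousWithinAt
  · intro x hx
    rw [interior_Ici] at hx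
    have hx : 3 < x := hx
    rw [(hder x hx.le).deriv]
    have hl := Real.lt_log_one_add_of_pos (x := x - 2) (by linarith)
    rw [show 1 + (x - 2) = x - 1 by ring, show x - 2 + 2 = x by ring] at hl
    rw [div_lt_iff₀ (by linarith)] at hl
    have hp : 0 < x * (x - 2) := mul_pos (by linarith) (by linarith)
    have hx1 : x - 1 ≠ 0 := by linarith
    have hx2 : x - 2 ≠ 0 := by linarith
    have hx0 : x ≠ 0 := by linarith
    have hL : x * (x - 2) < ((x - 1) ^ 2 + 1) * Real.log (x - 1) := by
      have hlog : 0 < Real.log (x - 1) := Real.log_pos (by linarith)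
      nlinarith [mul_pos hlog (pow_pos (show 0 < x - 2 by linarith) 2)]
    have : ((1 * (x * (x - 2)) - (x - 1) * (1 * (x - 2) + x * 1)) / (x * (x - 2)) ^ 2)
        * Real.log (x - 1) + (x - 1) / (x * (x - 2)) * (1 / (x - 1))
        = (x * (x - 2) - ((x - 1) ^ 2 + 1) * Real.log (x - 1)) / (x * (x - 2)) ^ 2 := by
      field_simp
      ring
    rw [this]
    exact div_neg_of_neg_of_pos (by linarith) (by positivity)

/-- (From the proof of Theorem C, Eq. (5.1)): for every integer `q ≥ 3`,
`β_c(q)(1 − 1/q) < β_c(q−1)`; for `q ≥ 4` this follows from the fact that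
`f(x) = ((x−1)/(x(x−2))) log(x−1)` is strictly decreasing on `[3,∞)`. -/
theorem betaC_recursive_inequality :
    (∀ q : ℕ, 3 ≤ q → betaC q * (1 - 1 / (q : ℝ)) < betaC (q - 1)) ∧
    StrictAntiOn (fun x : ℝ => (x - 1) / (x * (x - 2)) * Real.log (x - 1))
      (Set.Ici (3 : ℝ)) := by
  refine ⟨?_, aux_f_anti⟩
  intro q hq
  rcases Nat.lt_or_ge 3 q with h4 | h3
  · have hq4 : (4 : ℝ) ≤ q := by exact_mod_cast h4
    have h := aux_f_anti (a := (q : ℝ) - 1) (b := (q : ℝ))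
      (Set.mem_Ici.2 (by linarith)) (Set.mem_Ici.2 (by linarith)) (by linarith)
    have h := mul_lt_mul_of_pos_left h (show (0 : ℝ) < q - 1 by linarith)
    have a1 : q ≠ 2 := by omega
    have a2 : q - 1 ≠ 2 := by omega
    simp only [betaC, if_neg a1, if_neg a2]
    rw [Nat.cast_sub (by omega)]
    have e0 : (q : ℝ) ≠ 0 := by linarith
    have e1 : (q : ℝ) - 1 ≠ 0 := by linarith
    have e2 : (q : ℝ) - 2 ≠ 0 := by linarith
    have e3 : (q : ℝ) - 1 - 2 ≠ 0 := by intro h; linarith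
    push_cast
    have l : ((q : ℝ) - 1) * Real.log ((q : ℝ) - 1) / ((q : ℝ) - 2) * (1 - 1 / (q : ℝ))
        = ((q : ℝ) - 1) * (((q : ℝ) - 1) / (q * ((q : ℝ) - 2)) * Real.log ((q : ℝ) - 1)) := by
      field_simp
    have r : ((q : ℝ) - 1 - 1) * Real.log ((q : ℝ) - 1 - 1) / ((q : ℝ) - 1 - 2)
        = ((q : ℝ) - 1) * (((q : ℝ) - 1 - 1) / (((q : ℝ) - 1) * ((q : ℝ) - 1 - 2))
          * Real.log ((q : ℝ) - 1 - 1)) := by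
      generalize Real.log ((q : ℝ) - 1 - 1) = L
      generalize (q : ℝ) - 1 - 2 = c at *
      field_simp
    rw [l, r]
    exact h
  · obtain rfl : q = 3 := by omega
    have := Real.log_two_lt_d9
    norm_num [betaC]
    linarith
end
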